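/- Let P = {P_I} ∈ ℝ^(C(n,k)) be a height function on the vertices of the hypersimplex Δ_{k,n}, and let D_P be the induced regular subdivision. If P is a positive tropical Plücker vector, then every face of D_P is positroidal; conversely, if every face of D_P is positroidal, then P is a positive tropical Plücker vector. -/

import Mathlib

open scoped BigOperators

/-- The maximal minor of a `k × n` matrix with column set `I` (zero if `|I| ≠ k`). -/
noncomputable def minor (k n : ℕ) (A : Matrix (Fin k) (Fin n) ℝ) (I : Finset (Fin n)) : ℝ :=
  if h : I.card = k then (A.submatrix id fun j : Fin k => ((I.orderIsoOfFin h j : I) : Fin n)).det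
  else 0

/-- `𝓑` is the set of bases of a positroid of rank `k` on `[n]`. -/
def IsPositroid (n k : ℕ) (𝓑 : Set (Finset (Fin n))) : Prop :=
  ∃ A : Matrix (Fin k) (Fin n) ℝ, A.rank = k ∧
    (∀ I : Finset (Fin n), 0 ≤ minor k n A I) ∧
    (∀ I : Finset (Fin n), I.card = k → (I ∈ 𝓑 ↔ minor k n A I ≠ 0))

/-- `P` is a positive tropical Plücker vector: for all `S` of size `k−2` and
`a < b < c < d` disjoint from `S`, either
`P_{Sac}+P_{Sbd} = P_{Sab}+P_{Scd} ≤ P_{Sad}+P_{Sbc}` or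
`P_{Sac}+P_{Sbd} = P_{Sad}+P_{Sbc} ≤ P_{Sab}+P_{Scd}`. -/
def IsPosTropPluecker (n k : ℕ) (P : Finset (Fin n) → ℝ) : Prop :=
  ∀ S : Finset (Fin n), S.card + 2 = k → ∀ a b c d : Fin n,
    a < b → b < c → c < d → a ∉ S → b ∉ S → c ∉ S → d ∉ S →
    ((P (insert a (insert c S)) + P (insert b (insert d S)) =
        P (insert a (insert b S)) + P (insert c (insert d S)) ∧
      P (insert a (insert b S)) + P (insert c (insert d S)) ≤
        P (insert a (insert d S)) + P (insert b (insert c S))) ∨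
     (P (insert a (insert c S)) + P (insert b (insert d S)) =
        P (insert a (insert d S)) + P (insert b (insert c S)) ∧
      P (insert a (insert d S)) + P (insert b (insert c S)) ≤
        P (insert a (insert b S)) + P (insert c (insert d S))))

/-- The vertex set of the face of the regular subdivision `D_P` of `Δ_{k,n}`
selected by `λ ∈ ℝⁿ`: the `k`-subsets `I` maximizing `λ·e_I − P_I`. -/
def faceBases (n k : ℕ) (P : Finset (Fin n) → ℝ) (lam : Fin n → ℝ) :
    Set (Finset (Fin n)) :=
  {I | I.card = k ∧ ∀ J : Finset (Fin n), J.card = k →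
        (∑ i ∈ J, lam i) - P J ≤ (∑ i ∈ I, lam i) - P I}

/-- The square matrix whose columns are the vectors `u (f j)`. -/
def colMatrix {α : Type*} {k : ℕ} (u : α → Fin k → ℝ) (f : Fin k → α) :
    Matrix (Fin k) (Fin k) ℝ :=
  Matrix.of fun r j => u (f j) r

/-- The maximal minor of a configuration of vectors in `ℝᵏ` indexed by a linear order, for the
column set `J` (zero if `|J| ≠ k`). -/
noncomputable def pluecker {α : Type*} [LinearOrder α] {k : ℕ} (u : α → Fin k → ℝ)
    (J : Finset α) : ℝ :=
  if h : J.card = k then (colMatrix u (J.orderEmbOfFin h)).det else 0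

theorem colMatrix_updateCol {α : Type*} {k : ℕ} (u : α → Fin k → ℝ) (f : Fin k → α)
    (i : Fin k) (b : α) :
    (colMatrix u f).updateCol i (u b) = colMatrix u (Function.update f i b) := by
  ext r j
  by_cases h : j = i
  · subst h; simp [colMatrix]
  · simp [colMatrix, h]

theorem det_colMatrix_of_not_injective {α : Type*} {k : ℕ} (u : α → Fin k → ℝ) (f : Fin k → α)
    (hf : ¬ Function.Injective f) : (colMatrix u f).det = 0 := by
  simp only [Function.Injective, not_forall] at hf
  obtain ⟨i, j, hij, hne⟩ := hf
  exact Matrix.det_zero_of_column_eq hne fun r => by simp [colMatrix, hij]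

theorem exists_perm_eq_orderEmbOfFin_comp {α : Type*} [LinearOrder α] {k : ℕ} {f : Fin k → α}
    (hf : Function.Injective f) {J : Finset α} (hJ : Finset.univ.image f = J) (h : J.card = k) :
    ∃ σ : Equiv.Perm (Fin k), f = J.orderEmbOfFin h ∘ σ := by
  have hmem : ∀ j, f j ∈ J := fun j => hJ ▸ Finset.mem_image_of_mem f (Finset.mem_univ j)
  have hinj : Function.Injective fun j => (J.orderIsoOfFin h).symm ⟨f j, hmem j⟩ := by
    intro i j hij
    exact hf (by simpa using hij)
  refine ⟨Equiv.ofBijective _ (Finite.injective_iff_bijective.mp hinj), ?_⟩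
  ext j
  simp [← Finset.coe_orderIsoOfFin_apply]

theorem det_colMatrix_comp_perm {α : Type*} {k : ℕ} (u : α → Fin k → ℝ) (f : Fin k → α)
    (σ : Equiv.Perm (Fin k)) :
    (colMatrix u (f ∘ σ)).det = (Equiv.Perm.sign σ : ℤ) * (colMatrix u f).det :=
  Matrix.det_permute' σ (colMatrix u f)

theorem card_image_univ_of_injective {α : Type*} [DecidableEq α] {k : ℕ} {f : Fin k → α}
    (hf : Function.Injective f) : (Finset.univ.image f).card = k := by
  simp [Finset.card_image_of_injective _ hf]

/-- A determinant of columns is, up to a sign not depending on the vectors, a minor. -/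
theorem exists_sign_det_colMatrix {α : Type*} [LinearOrder α] {k : ℕ} {f : Fin k → α}
    (hf : Function.Injective f) :
    ∃ ε : ℝ, ε ≠ 0 ∧ ∀ u : α → Fin k → ℝ,
      (colMatrix u f).det = ε * pluecker u (Finset.univ.image f) := by
  have h := card_image_univ_of_injective hf
  obtain ⟨σ, hσ⟩ := exists_perm_eq_orderEmbOfFin_comp hf rfl h
  refine ⟨(Equiv.Perm.sign σ : ℤ), by simp, fun u => ?_⟩
  rw [pluecker, dif_pos h, ← det_colMatrix_comp_perm, ← hσ]

theorem pluecker_image_of_strictMono {α : Type*} [LinearOrder α] {k : ℕ} (u : α → Fin k → ℝ)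
    {f : Fin k → α} (hf : StrictMono f) :
    pluecker u (Finset.univ.image f) = (colMatrix u f).det := by
  have h := card_image_univ_of_injective hf.injective
  rw [pluecker, dif_pos h, ← Finset.orderEmbOfFin_unique h (fun x => by simp) hf]

/-- The sign of the Vandermonde determinant corrects the sign of an unsorted minor. -/
theorem pluecker_eq_det_mul_sign {α : Type*} [LinearOrder α] {k : ℕ} {e : α → ℝ}
    (he : StrictMono e) (u : α → Fin k → ℝ) {f : Fin k → α} (hf : Function.Injective f)
    {J : Finset α} (hJ : Finset.univ.image f = J) :
    pluecker u J =
      (colMatrix u f).det * (SignType.sign (Matrix.vandermonde (e ∘ f)).det : ℝ) := by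
  have h : J.card = k := hJ ▸ card_image_univ_of_injective hf
  obtain ⟨σ, hσ⟩ := exists_perm_eq_orderEmbOfFin_comp hf hJ h
  set g := J.orderEmbOfFin h
  have hg : 0 < (Matrix.vandermonde (e ∘ g)).det := by
    rw [Matrix.det_vandermonde]
    refine Finset.prod_pos fun i _ => Finset.prod_pos fun j hj => sub_pos.mpr (he ?_)
    exact g.strictMono (Finset.mem_Ioi.mp hj)
  have hV : (Matrix.vandermonde (e ∘ f)).det =
      (Equiv.Perm.sign σ : ℤ) * (Matrix.vandermonde (e ∘ g)).det := by
    rw [← Matrix.det_permute]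
    congr 1
    ext i j
    simp [hσ, Matrix.vandermonde]
  rw [hV, pluecker, dif_pos h, hσ, det_colMatrix_comp_perm, sign_mul, sign_pos hg]
  rcases Int.units_eq_one_or (Equiv.Perm.sign σ) with h1 | h1 <;> simp [h1, g]

theorem det_colMatrix_three_term {α : Type*} {m : ℕ} (u : α → Fin (m + 2) → ℝ) (g : Fin m → α)
    (q : α → α → ℝ)
    (hq : ∀ x y, q x y = (colMatrix u (Fin.cons x (Fin.cons y g : Fin (m + 1) → α))).det)
    (a b c d : α) : q a c * q b d = q a b * q c d + q a d * q b c := by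
  set M := colMatrix u (Fin.cons b (Fin.cons d g : Fin (m + 1) → α)) with hM
  set N := colMatrix u (Fin.cons a (Fin.cons b g : Fin (m + 1) → α)) with hN
  have hN1 : ∀ x, N.cramer (u x) 1 = q a x := fun x => by
    rw [Matrix.cramer_apply, hN, colMatrix_updateCol, hq]
    congr 2
    ext j
    refine Fin.cases ?_ (fun j => Fin.cases ?_ (fun j => ?_) j) j <;>
      simp [Function.update, Fin.ext_iff]
  have hM0 : M.cramer (u c) 0 = q c d := by
    rw [Matrix.cramer_apply, hM, colMatrix_updateCol, hq, Fin.update_cons_zero]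
  have hM1 : M.cramer (u c) 1 = q b c := by
    rw [Matrix.cramer_apply, hM, colMatrix_updateCol, hq]
    congr 2
    ext j
    refine Fin.cases ?_ (fun j => Fin.cases ?_ (fun j => ?_) j) j <;>
      simp [Function.update, Fin.ext_iff]
  have hg : ∀ j : Fin m, q a (g j) = 0 := fun j => by
    rw [hq]
    refine det_colMatrix_of_not_injective _ _ fun h => ?_
    have := @h (Fin.succ 0) (Fin.succ j.succ) (by simp)
    simp [Fin.ext_iff] at this
  have key := congrArg (fun w => N.cramer w 1) (Matrix.mulVec_cramer M (u c))
  have hsum : M.mulVec (M.cramer (u c)) = ∑ j, M.cramer (u c) j • fun r => M r j := by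
    ext r
    simp [Matrix.mulVec, dotProduct, mul_comm]
  have hcol : ∀ j, (fun r => M r j) = u ((Fin.cons b (Fin.cons d g : Fin (m + 1) → α) :
    Fin (m + 2) → α) j) := fun j => rfl
  have hone : (Fin.cons b (Fin.cons d g : Fin (m + 1) → α) : Fin (m + 2) → α) 1 = d := rfl
  simp only [hsum, hcol, map_sum, map_smul, Finset.sum_apply, Pi.smul_apply, smul_eq_mul, hN1]
    at key
  rw [Fin.sum_univ_succ, Fin.sum_univ_succ] at key
  simp only [Fin.cons_zero, Fin.cons_succ, hg, mul_zero, Finset.sum_const_zero, add_zero,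
    Fin.succ_zero_eq_one, hM0, hM1, hone] at key
  rw [← hq] at key
  linarith

/-- The three-term Plücker relation for sorted minors. -/
theorem pluecker_three_term {α : Type*} [LinearOrder α] {k : ℕ} {e : α → ℝ} (he : StrictMono e)
    (u : α → Fin k → ℝ) {S : Finset α} (hS : S.card + 2 = k) {a b c d : α}
    (hab : a < b) (hbc : b < c) (hcd : c < d) (ha : a ∉ S) (hb : b ∉ S) (hc : c ∉ S)
    (hd : d ∉ S) :
    pluecker u (insert a (insert c S)) * pluecker u (insert b (insert d S)) =
      pluecker u (insert a (insert b S)) * pluecker u (insert c (insert d S)) +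
      pluecker u (insert a (insert d S)) * pluecker u (insert b (insert c S)) := by
  subst hS
  set g := S.orderEmbOfFin rfl
  set q : α → α → ℝ := fun x y =>
    (colMatrix u (Fin.cons x (Fin.cons y g : Fin (S.card + 1) → α))).det with hq
  set h : α → ℝ := fun x => (SignType.sign (∏ j, (e (g j) - e x)) : ℝ) with hh
  set C : ℝ := (SignType.sign (Matrix.vandermonde (e ∘ g)).det : ℝ)
  have hgS : ∀ j, g j ∈ S := fun j => Finset.orderEmbOfFin_mem _ _ j
  have key : ∀ x y, x < y → x ∉ S → y ∉ S →
      pluecker u (insert x (insert y S)) = q x y * (h x * h y * C) := by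
    intro x y hxy hx hy
    have hinj : Function.Injective
        (Fin.cons x (Fin.cons y g : Fin (S.card + 1) → α) : Fin (S.card + 2) → α) := by
      rw [Fin.cons_injective_iff, Fin.cons_injective_iff]
      refine ⟨?_, ?_, g.injective⟩
      · rintro ⟨j, hj⟩
        revert hj
        refine Fin.cases ?_ (fun j => ?_) j
        · intro hj; exact hxy.ne' hj
        · intro hj; exact hx (hj ▸ hgS j)
      · rintro ⟨j, hj⟩; exact hy (hj ▸ hgS j)
    rw [pluecker_eq_det_mul_sign he u hinj]
    · congr 1
      rw [Matrix.det_vandermonde, Fin.prod_univ_succ, Fin.prod_univ_succ]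
      simp only [Fin.prod_Ioi_zero, Fin.prod_Ioi_succ, Fin.prod_univ_succ (n := S.card),
        Function.comp_apply, Fin.cons_zero, Fin.cons_succ]
      rw [sign_mul, sign_mul, sign_mul, sign_pos (sub_pos.mpr (he hxy)), ← mul_assoc]
      simp [hh, C, Matrix.det_vandermonde]
    · ext z
      simp only [Finset.mem_image, Finset.mem_univ, true_and, Fin.exists_fin_succ, Fin.cons_zero,
        Fin.cons_succ, Finset.mem_insert]
      have : (∃ j, g j = z) ↔ z ∈ S := by
        rw [← Set.mem_range, Finset.range_orderEmbOfFin]; simp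
      rw [this]
      tauto
  have rel := det_colMatrix_three_term u g q (fun _ _ => rfl) a b c d
  rw [key a c (hab.trans hbc) ha hc, key b d (hbc.trans hcd) hb hd, key a b hab ha hb,
    key c d hcd hc hd, key a d (hab.trans (hbc.trans hcd)) ha hd, key b c hbc hb hc]
  linear_combination (h a * h b * h c * h d * C ^ 2) * rel

/-- The increasing enumeration of `{0, …, i - 1} ∪ {m + 1 + i, …, m + k}`. -/
def cornerEnum {k : ℕ} (m : ℕ) (i j : Fin k) : ℕ :=
  if j < i then j else m + 1 + j

theorem cornerEnum_strictMono {k : ℕ} (m : ℕ) (i : Fin k) : StrictMono (cornerEnum m i) := by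
  intro a b hab
  simp only [cornerEnum, Fin.lt_def] at *
  split_ifs <;> omega

theorem image_cornerEnum {k : ℕ} (m : ℕ) (i : Fin k) :
    Finset.univ.image (cornerEnum m i) =
      Finset.range i ∪ Finset.Icc (m + 1 + i) (m + k) := by
  ext x
  simp only [Finset.mem_image, Finset.mem_univ, true_and, Finset.mem_union, Finset.mem_range,
    Finset.mem_Icc, cornerEnum, Fin.lt_def]
  constructor
  · rintro ⟨j, rfl⟩
    split_ifs <;> omega
  · rintro (h | h)
    · exact ⟨⟨x, by omega⟩, by simp [h]⟩
    · refine ⟨⟨x - (m + 1), by omega⟩, ?_⟩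
      rw [if_neg (by simp; omega)]
      simp only
      omega

/-- A further vector can be chosen with prescribed minors on the corner sets. -/
theorem exists_vector_pluecker_corner {m k : ℕ} (u : ℕ → Fin k → ℝ)
    (hu : ∀ J ⊆ Finset.range (k + m), J.card = k → pluecker u J ≠ 0) (τ : Fin k → ℝ) :
    ∃ v : Fin k → ℝ, ∀ i : Fin k,
      pluecker (Function.update u (k + m) v) (Finset.univ.image (cornerEnum m i)) = τ i := by
  rcases k with _ | k
  · exact ⟨0, fun i => i.elim0⟩
  set F : Fin (k + 1) → (Fin (k + 1) → ℝ) →ₗ[ℝ] ℝ := fun i =>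
    LinearMap.proj (Fin.last k) ∘ₗ (colMatrix u (cornerEnum m i)).cramer with hF
  set G : Matrix (Fin (k + 1)) (Fin (k + 1)) ℝ := Matrix.of fun i r => F i (Pi.single r 1) with hG
  have hGv : ∀ v i, G.mulVec v i = F i v := by
    intro v i
    conv_rhs => rw [pi_eq_sum_univ' v]
    simp [hG, Matrix.mulVec, dotProduct, mul_comm]
  have hFu : ∀ i j : Fin (k + 1), F i (u j) =
      (colMatrix u (Function.update (cornerEnum m i) (Fin.last k) j)).det := fun i j => by
    simp only [hF, LinearMap.comp_apply, LinearMap.proj_apply, Matrix.cramer_apply,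
      colMatrix_updateCol]
  set U : Matrix (Fin (k + 1)) (Fin (k + 1)) ℝ := colMatrix u fun j => (j : ℕ) with hU
  have hGU : ∀ i j, (G * U) i j = F i (u j) := fun i j => (hGv (u j) i).symm ▸ rfl
  have htri : (G * U).BlockTriangular id := by
    intro i j hji
    simp only [id] at hji
    rw [hGU, hFu]
    refine det_colMatrix_of_not_injective _ _ fun hinj => ?_
    have hj : j ≠ Fin.last k := (hji.trans_le (Fin.le_last i)).ne
    refine hj (hinj ?_)
    simp [hj, cornerEnum, hji]
  have hdet : (G * U).det ≠ 0 := by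
    rw [Matrix.det_of_isUpperTriangular htri]
    refine Finset.prod_ne_zero_iff.mpr fun i _ => ?_
    rw [hGU, hFu]
    have hlt : ∀ a, a ≠ Fin.last k → cornerEnum m i a ≠ (i : ℕ) ∧
        cornerEnum m i a < k + 1 + m := by
      intro a ha
      have : (a : ℕ) < k := lt_of_le_of_ne (Nat.lt_succ_iff.mp a.2) fun h => ha (Fin.ext h)
      simp only [cornerEnum, Fin.lt_def]
      split_ifs <;> omega
    have hinj : Function.Injective
        (Function.update (cornerEnum m i) (Fin.last k) (i : ℕ)) := by
      intro a b hab
      by_cases ha : a = Fin.last k <;> by_cases hb : b = Fin.last k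
      · rw [ha, hb]
      · simp only [ha, Function.update_self, Function.update_of_ne hb] at hab
        exact absurd hab.symm (hlt b hb).1
      · simp only [hb, Function.update_self, Function.update_of_ne ha] at hab
        exact absurd hab (hlt a ha).1
      · rw [Function.update_of_ne ha, Function.update_of_ne hb] at hab
        exact (cornerEnum_strictMono m i).injective hab
    obtain ⟨ε, hε, h⟩ := exists_sign_det_colMatrix hinj
    rw [h]
    refine mul_ne_zero hε (hu _ ?_ (card_image_univ_of_injective hinj))
    intro x hx
    obtain ⟨a, -, rfl⟩ := Finset.mem_image.mp hx
    rw [Finset.mem_range]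
    by_cases ha : a = Fin.last k
    · rw [ha, Function.update_self]; omega
    · rw [Function.update_of_ne ha]; exact (hlt a ha).2
  have hGdet : IsUnit G.det := by
    rw [Matrix.det_mul] at hdet
    exact isUnit_iff_ne_zero.mpr (left_ne_zero_of_mul hdet)
  refine ⟨G⁻¹.mulVec τ, fun i => ?_⟩
  have h1 : F i (G⁻¹.mulVec τ) = τ i := by
    rw [← hGv, Matrix.mulVec_mulVec, Matrix.mul_nonsing_inv _ hGdet, Matrix.one_mulVec]
  rw [← h1, pluecker_image_of_strictMono _ (cornerEnum_strictMono m i)]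
  simp only [hF, LinearMap.comp_apply, LinearMap.proj_apply, Matrix.cramer_apply]
  congr 1
  ext r j
  by_cases hj : j = Fin.last k
  · subst hj
    have : cornerEnum m i (Fin.last k) = k + 1 + m := by
      simp only [cornerEnum, (Fin.le_last i).not_gt, if_false, Fin.val_last]
      omega
    simp [colMatrix, this]
  · have : cornerEnum m i j ≠ k + 1 + m := by
      have : (j : ℕ) < k := lt_of_le_of_ne (Nat.lt_succ_iff.mp j.2) fun h => hj (Fin.ext h)
      simp only [cornerEnum]
      split_ifs <;> omega
    simp [colMatrix, this, hj]

open Filter Topology in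
/-- `x` is a positive sequence with `x s ~ c * exp (-s * p)` for some `c > 0`. -/
def HasExpDecay (x : ℕ → ℝ) (p : ℝ) : Prop :=
  (∀ s, 0 < x s) ∧ ∃ c : ℝ, 0 < c ∧ Tendsto (fun s : ℕ => x s * Real.exp (s * p)) atTop (𝓝 c)

open Filter Topology in
theorem tendsto_exp_nat_mul_of_neg {t : ℝ} (ht : t < 0) :
    Tendsto (fun s : ℕ => Real.exp (s * t)) atTop (𝓝 0) :=
  Real.tendsto_exp_atBot.comp (tendsto_natCast_atTop_atTop.atTop_mul_const_of_neg ht)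

namespace HasExpDecay

variable {x y : ℕ → ℝ} {p q : ℝ}

theorem mul (hx : HasExpDecay x p) (hy : HasExpDecay y q) :
    HasExpDecay (fun s => x s * y s) (p + q) := by
  obtain ⟨hx0, c, hc, hxc⟩ := hx
  obtain ⟨hy0, d, hd, hyd⟩ := hy
  refine ⟨fun s => mul_pos (hx0 s) (hy0 s), c * d, mul_pos hc hd, (hxc.mul hyd).congr fun s => ?_⟩
  rw [mul_add, Real.exp_add]
  ring

theorem div (hx : HasExpDecay x p) (hy : HasExpDecay y q) :
    HasExpDecay (fun s => x s / y s) (p - q) := by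
  obtain ⟨hx0, c, hc, hxc⟩ := hx
  obtain ⟨hy0, d, hd, hyd⟩ := hy
  refine ⟨fun s => div_pos (hx0 s) (hy0 s), c / d, div_pos hc hd,
    (hxc.div hyd hd.ne').congr fun s => ?_⟩
  rw [Pi.div_apply, mul_sub, Real.exp_sub]
  ring

/-- Sequences of faster decay are negligible. -/
theorem tendsto_of_lt (hx : HasExpDecay x p) (hqp : q < p) :
    Filter.Tendsto (fun s : ℕ => x s * Real.exp (s * q)) Filter.atTop (nhds 0) := by
  obtain ⟨-, c, -, hxc⟩ := hx
  have := hxc.mul (tendsto_exp_nat_mul_of_neg (sub_neg.mpr hqp))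
  rw [mul_zero] at this
  refine this.congr fun s => ?_
  rw [mul_assoc, ← Real.exp_add]
  ring_nf

theorem add (hx : HasExpDecay x p) (hy : HasExpDecay y q) (hpq : p ≤ q) :
    HasExpDecay (fun s => x s + y s) p := by
  refine ⟨fun s => add_pos (hx.1 s) (hy.1 s), ?_⟩
  obtain ⟨c, hc, hxc⟩ := hx.2
  obtain ⟨d, hd, hyd⟩ := hy.2
  rcases hpq.lt_or_eq with h | rfl
  · refine ⟨c, hc, ?_⟩
    simpa [add_mul] using hxc.add (hy.tendsto_of_lt h)
  · exact ⟨c + d, add_pos hc hd, by simpa [add_mul] using hxc.add hyd⟩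

end HasExpDecay

/-- The tropical shadow of a three-term relation solved for one factor. -/
theorem HasExpDecay.of_three_term {x y z w z' w' : ℕ → ℝ} {px py pz pw pz' pw' : ℝ}
    (hx : HasExpDecay x px) (hz : HasExpDecay z pz) (hw : HasExpDecay w pw)
    (hz' : HasExpDecay z' pz') (hw' : HasExpDecay w' pw')
    (hrel : ∀ s, x s * y s = z s * w s + z' s * w' s)
    (htrop : (px + py = pz + pw ∧ pz + pw ≤ pz' + pw') ∨
      (px + py = pz' + pw' ∧ pz' + pw' ≤ pz + pw)) : HasExpDecay y py := by
  have hy : y = fun s => (z s * w s + z' s * w' s) / x s := by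
    ext s
    rw [← hrel, mul_div_cancel_left₀ _ (hx.1 s).ne']
  rw [hy]
  rcases htrop with ⟨h1, h2⟩ | ⟨h1, h2⟩
  · rw [show py = pz + pw - px by linarith]
    exact ((hz.mul hw).add (hz'.mul hw') h2).div hx
  · rw [show py = pz' + pw' - px by linarith]
    simp only [add_comm (z _ * w _)]
    exact ((hz'.mul hw').add (hz.mul hw) h2).div hx

/-- The positive tropical Plücker relations for a function on the `k`-subsets of
`{0, …, n - 1} ⊆ ℕ`. -/
def IsPosTropPlueckerOn (n k : ℕ) (P : Finset ℕ → ℝ) : Prop :=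
  ∀ S ⊆ Finset.range n, S.card + 2 = k → ∀ a b c d : ℕ,
    a < b → b < c → c < d → d < n → a ∉ S → b ∉ S → c ∉ S → d ∉ S →
    ((P (insert a (insert c S)) + P (insert b (insert d S)) =
        P (insert a (insert b S)) + P (insert c (insert d S)) ∧
      P (insert a (insert b S)) + P (insert c (insert d S)) ≤
        P (insert a (insert d S)) + P (insert b (insert c S))) ∨
     (P (insert a (insert c S)) + P (insert b (insert d S)) =
        P (insert a (insert d S)) + P (insert b (insert c S)) ∧
      P (insert a (insert d S)) + P (insert b (insert c S)) ≤
        P (insert a (insert b S)) + P (insert c (insert d S))))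

open Classical in
/-- The elements of `J` below `n` lying strictly between two non-elements of `J` below `n`. -/
noncomputable def innerElements (n : ℕ) (J : Finset ℕ) : Finset ℕ :=
  {b ∈ J | (∃ a < b, a ∉ J) ∧ ∃ c, b < c ∧ c < n ∧ c ∉ J}

theorem mem_innerElements {n b : ℕ} {J : Finset ℕ} :
    b ∈ innerElements n J ↔ b ∈ J ∧ (∃ a < b, a ∉ J) ∧ ∃ c, b < c ∧ c < n ∧ c ∉ J := by
  classical
  simp [innerElements]

/-- A `k`-set containing the last index and without inner elements is a corner set. -/
theorem exists_eq_image_cornerEnum {k m : ℕ} {J : Finset ℕ} (hJ : J ⊆ Finset.range (k + m + 1))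
    (hcard : J.card = k) (hn : k + m ∈ J) (hinner : innerElements (k + m) J = ∅) :
    ∃ i : Fin k, J = Finset.univ.image (cornerEnum m i) := by
  have hex : ∃ a, a < k + m ∧ a ∉ J := by
    by_contra! h
    have : Finset.range (k + m + 1) ⊆ J := fun x hx => by
      rcases (Nat.lt_succ_iff.mp (Finset.mem_range.mp hx)).lt_or_eq with h1 | rfl
      · exact h x h1
      · exact hn
    have := Finset.card_le_card this
    simp at this
    omega
  classical
  obtain ⟨ha1, ha2⟩ := Nat.find_spec hex
  have hmin : ∀ x < Nat.find hex, x ∈ J := fun x hx => by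
    have := Nat.find_min hex hx
    by_contra h
    exact this ⟨hx.trans ha1, h⟩
  generalize Nat.find hex = a at ha1 ha2 hmin
  obtain ⟨c, hc, hmax⟩ := Finset.exists_max_image ((Finset.range (k + m)).filter (· ∉ J)) id
    ⟨a, by simpa using ⟨ha1, ha2⟩⟩
  simp only [Finset.mem_filter, Finset.mem_range, id] at hc hmax
  have hac : a ≤ c := hmax a ⟨ha1, ha2⟩
  have hJeq : J = Finset.range a ∪ Finset.Ioc c (k + m) := by
    ext x
    simp only [Finset.mem_union, Finset.mem_range, Finset.mem_Ioc]
    constructor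
    · intro hx
      by_contra! h
      have hxn : x ≤ k + m := Nat.lt_succ_iff.mp (Finset.mem_range.mp (hJ hx))
      have hxa : x ≠ a := fun h => ha2 (h ▸ hx)
      have hxc : x ≠ c := fun h => hc.2 (h ▸ hx)
      have hcx : x ≤ c := by
        by_contra! hlt
        exact (h.2 hlt).not_ge hxn
      have : x ∈ innerElements (k + m) J := mem_innerElements.mpr
        ⟨hx, ⟨a, lt_of_le_of_ne h.1 hxa.symm, ha2⟩, c, lt_of_le_of_ne hcx hxc, hc⟩
      simp [hinner] at this
    · rintro (h | h)
      · exact hmin x h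
      · rcases h.2.lt_or_eq with h1 | rfl
        · by_contra hx
          exact (hmax x ⟨h1, hx⟩).not_gt h.1
        · exact hn
  have hck : a + (k + m - c) = k := by
    refine Eq.trans ?_ hcard
    rw [hJeq, Finset.card_union_of_disjoint, Finset.card_range, Nat.card_Ioc]
    rw [Finset.disjoint_left]
    intro x hx hx'
    simp at hx hx'
    omega
  refine ⟨⟨a, by omega⟩, ?_⟩
  rw [image_cornerEnum]
  refine hJeq.trans ?_
  ext x
  simp only [Finset.mem_union, Finset.mem_range, Finset.mem_Ioc, Finset.mem_Icc]
  omega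

/-- An inner element can be exchanged for a smaller or for a larger non-element so that the
number of inner elements drops. -/
theorem exists_exchange_innerElements {n b : ℕ} {J : Finset ℕ} (hb : b ∈ innerElements n J) :
    ∃ a c, a < b ∧ b < c ∧ c < n ∧ a ∉ J ∧ c ∉ J ∧
      (innerElements n (insert a (J.erase b))).card < (innerElements n J).card ∧
      (innerElements n (insert c (J.erase b))).card < (innerElements n J).card := by
  obtain ⟨hbJ, hlow, c₀, hc₀⟩ := mem_innerElements.mp hb
  classical
  obtain ⟨hab, haJ⟩ := Nat.find_spec hlow
  have hmin : ∀ x < Nat.find hlow, x ∈ J := fun x hx => by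
    have := Nat.find_min hlow hx
    by_contra h
    exact this ⟨hx.trans hab, h⟩
  generalize Nat.find hlow = a at hab haJ hmin
  obtain ⟨c, hc, hmax⟩ := Finset.exists_max_image ((Finset.range n).filter (· ∉ J)) id
    ⟨c₀, by simpa using hc₀.2⟩
  simp only [Finset.mem_filter, Finset.mem_range, id] at hc hmax
  have hbc : b < c := hc₀.1.trans_le (hmax c₀ hc₀.2)
  refine ⟨a, c, hab, hbc, hc.1, haJ, hc.2, Finset.card_lt_card ?_, Finset.card_lt_card ?_⟩ <;>
    rw [Finset.ssubset_iff_of_subset]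
  · refine ⟨b, hb, fun h => ?_⟩
    have := (mem_innerElements.mp h).1
    simp [hab.ne'] at this
  · intro x hx
    simp only [mem_innerElements, Finset.mem_insert, Finset.mem_erase] at hx ⊢
    obtain ⟨hx, ⟨a', ha', ha''⟩, c', hc', hc'', hc'''⟩ := hx
    grind
  · refine ⟨b, hb, fun h => ?_⟩
    have := (mem_innerElements.mp h).1
    simp [hbc.ne] at this
  · intro x hx
    simp only [mem_innerElements, Finset.mem_insert, Finset.mem_erase] at hx ⊢
    obtain ⟨hx, ⟨a', ha', ha''⟩, c', hc', hc'', hc'''⟩ := hx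
    grind

theorem pluecker_congr {α : Type*} [LinearOrder α] {k : ℕ} {u v : α → Fin k → ℝ} {J : Finset α}
    (h : ∀ j ∈ J, u j = v j) : pluecker u J = pluecker v J := by
  unfold pluecker
  split_ifs with hJ
  · congr 1
    ext r j
    simp [colMatrix, h _ (Finset.orderEmbOfFin_mem J hJ j)]
  · rfl

/-- A positive tropical Plücker vector is the tropicalization of a family of totally positive
configurations. -/
theorem IsPosTropPlueckerOn.exists_family {k m : ℕ} {P : Finset ℕ → ℝ}
    (hP : IsPosTropPlueckerOn (k + m) k P) (hP0 : P (Finset.range k) = 0) :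
    ∃ A : ℕ → ℕ → Fin k → ℝ, ∀ J ⊆ Finset.range (k + m), J.card = k →
      HasExpDecay (fun s => pluecker (A s) J) (P J) := by
  induction m with
  | zero =>
    have himg : Finset.univ.image (fun j : Fin k => (j : ℕ)) = Finset.range k := by
      ext x
      simpa using ⟨fun ⟨a, h⟩ => h ▸ a.2, fun h => ⟨⟨x, h⟩, rfl⟩⟩
    obtain ⟨E, hE⟩ : ∃ E : ℕ → Fin k → ℝ, pluecker E (Finset.range k) = 1 := by
      refine ⟨fun j r => if (r : ℕ) = j then 1 else 0, ?_⟩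
      rw [← himg, pluecker_image_of_strictMono _ Fin.val_strictMono]
      convert Matrix.det_one (n := Fin k) (R := ℝ)
      ext r j
      simp [colMatrix, Matrix.one_apply, Fin.ext_iff]
    refine ⟨fun _ => E, fun J hJ hcard => ?_⟩
    rw [Finset.eq_of_subset_of_card_le hJ (by simp [hcard]), Nat.add_zero, hP0]
    simp only [hE]
    exact ⟨fun _ => one_pos, 1, one_pos, by simp⟩
  | succ m ih =>
    obtain ⟨A, hA⟩ := ih fun S hS hcard a b c d hab hbc hcd hd =>
      hP S (hS.trans (Finset.range_subset_range.mpr (by omega))) hcard a b c d hab hbc hcd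
        (by omega)
    choose v hv using fun s : ℕ => exists_vector_pluecker_corner (m := m) (A s)
      (fun J hJ hcard => ((hA J hJ hcard).1 s).ne')
      (fun i => Real.exp (-(s * P (Finset.univ.image (cornerEnum m i)))))
    refine ⟨fun s => Function.update (A s) (k + m) (v s), ?_⟩
    have hold : ∀ J ⊆ Finset.range (k + m), J.card = k →
        HasExpDecay (fun s => pluecker (Function.update (A s) (k + m) (v s)) J) (P J) := by
      intro J hJ hcard
      have : (fun s => pluecker (Function.update (A s) (k + m) (v s)) J) =
          fun s => pluecker (A s) J := funext fun s => pluecker_congr fun j hj =>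
        Function.update_of_ne (Finset.mem_range.mp (hJ hj)).ne _ _
      exact this ▸ hA J hJ hcard
    have hnew : ∀ N, ∀ J ⊆ Finset.range (k + m + 1), J.card = k → k + m ∈ J →
        (innerElements (k + m) J).card = N →
        HasExpDecay (fun s => pluecker (Function.update (A s) (k + m) (v s)) J) (P J) := by
      intro N
      induction N using Nat.strong_induction_on with
      | _ N ihN =>
      intro J hJ hcard hn hN
      rcases (innerElements (k + m) J).eq_empty_or_nonempty with hinner | ⟨b, hb⟩
      · obtain ⟨i, rfl⟩ := exists_eq_image_cornerEnum hJ hcard hn hinner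
        simp only [hv]
        exact ⟨fun _ => Real.exp_pos _, 1, one_pos, by simp [← Real.exp_add]⟩
      · obtain ⟨a, c, hab, hbc, hcn, haJ, hcJ, ha, hc⟩ := exists_exchange_innerElements hb
        have hbJ := (mem_innerElements.mp hb).1
        set S := (J.erase b).erase (k + m) with hS
        have hbn : k + m ≠ b := by omega
        have hinsn : insert (k + m) S = J.erase b :=
          Finset.insert_erase (Finset.mem_erase.mpr ⟨hbn, hn⟩)
        have hinsb : insert b (insert (k + m) S) = J := by rw [hinsn, Finset.insert_erase hbJ]
        have haS : a ∉ S := fun h => haJ (Finset.mem_of_mem_erase (Finset.mem_of_mem_erase h))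
        have hcS : c ∉ S := fun h => hcJ (Finset.mem_of_mem_erase (Finset.mem_of_mem_erase h))
        have hbS : b ∉ S := by simp [S]
        have hnS : k + m ∉ S := by simp [S]
        have hScard : S.card + 2 = k := by
          rw [← hcard, ← hinsb, Finset.card_insert_of_notMem, Finset.card_insert_of_notMem hnS]
          simp [hbS, hbn.symm]
        have hSr : S ⊆ Finset.range (k + m) := fun x hx => by
          have h1 := Finset.mem_range.mp
            (hJ (Finset.mem_of_mem_erase (Finset.mem_of_mem_erase hx)))
          have h2 := Finset.ne_of_mem_erase hx
          exact Finset.mem_range.mpr (by omega)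
        have hcard2 : ∀ x y, x < y → x ∉ S → y ∉ S → (insert x (insert y S)).card = k := by
          intro x y hxy hx hy
          rw [Finset.card_insert_of_notMem (by simp [hx, hxy.ne]),
            Finset.card_insert_of_notMem hy, hScard]
        have hsub2 : ∀ {M x y}, x < M → y < M → S ⊆ Finset.range M →
            insert x (insert y S) ⊆ Finset.range M := by
          intro M x y hx hy hSM z hz
          simp only [Finset.mem_insert] at hz
          rcases hz with rfl | rfl | hz
          · simpa
          · simpa
          · exact hSM hz
        have hSr' : S ⊆ Finset.range (k + m + 1) :=
          hSr.trans (Finset.range_subset_range.mpr (by omega))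
        rw [← hinsb]
        refine HasExpDecay.of_three_term
          (hold _ (hsub2 (by omega) hcn hSr) (hcard2 a c (hab.trans hbc) haS hcS))
          (hold _ (hsub2 (by omega) (by omega) hSr) (hcard2 a b hab haS hbS))
          (ihN _ (hN ▸ hc) (insert c (insert (k + m) S)) (hsub2 (by omega) (by omega) hSr')
            (hcard2 c _ hcn hcS hnS) (by simp) (by rw [hinsn]))
          (ihN _ (hN ▸ ha) (insert a (insert (k + m) S)) (hsub2 (by omega) (by omega) hSr')
            (hcard2 a _ (by omega) haS hnS) (by simp) (by rw [hinsn]))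
          (hold _ (hsub2 (by omega) hcn hSr) (hcard2 b c hbc hbS hcS))
          (fun s => pluecker_three_term (e := fun x : ℕ => (x : ℝ)) Nat.strictMono_cast _ hScard
            hab hbc hcn haS hbS hcS hnS)
          (hP S hSr' hScard a b c (k + m) hab hbc hcn (by omega) haS hbS hcS hnS)
    intro J hJ hcard
    by_cases hn : k + m ∈ J
    · exact hnew _ J hJ hcard hn rfl
    · refine hold J (fun x hx => ?_) hcard
      have h1 := Finset.mem_range.mp (hJ hx)
      have h2 : x ≠ k + m := fun h => hn (h ▸ hx)
      exact Finset.mem_range.mpr (by omega)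

theorem minor_eq_pluecker {k n : ℕ} (A : Matrix (Fin k) (Fin n) ℝ) (J : Finset (Fin n)) :
    minor k n A J = pluecker (fun j r => A r j) J := rfl

theorem pluecker_map_val {k n : ℕ} (u : ℕ → Fin k → ℝ) (J : Finset (Fin n)) :
    pluecker (fun j : Fin n => u j) J = pluecker u (J.map Fin.valEmbedding) := by
  by_cases h : J.card = k
  · have himg : Finset.univ.image (fun j => (J.orderEmbOfFin h j : ℕ)) =
        J.map Fin.valEmbedding := by
      ext x
      have := Finset.range_orderEmbOfFin J h
      simp only [Set.ext_iff, Set.mem_range, Finset.mem_coe] at this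
      simp [← this]
    have hmono : StrictMono fun j => (J.orderEmbOfFin h j : ℕ) :=
      Fin.val_strictMono.comp (J.orderEmbOfFin h).strictMono
    rw [← himg, pluecker_image_of_strictMono u hmono, pluecker, dif_pos h]
    rfl
  · rw [pluecker, pluecker, dif_neg h, dif_neg (by simpa using h)]

theorem rank_eq_of_minor_ne_zero {k n : ℕ} {A : Matrix (Fin k) (Fin n) ℝ} {J : Finset (Fin n)}
    (h : minor k n A J ≠ 0) : A.rank = k := by
  unfold minor at h
  split_ifs at h with hJ
  · refine le_antisymm (by simpa using A.rank_le_card_height) ?_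
    have hrank := Matrix.rank_of_isUnit _
      ((Matrix.isUnit_iff_isUnit_det _).mpr (isUnit_iff_ne_zero.mpr h))
    rw [Fintype.card_fin] at hrank
    conv_lhs => rw [← hrank]
    have hmul : A.submatrix id (fun j : Fin k => ((J.orderIsoOfFin hJ j : J) : Fin n)) =
        A * (1 : Matrix (Fin n) (Fin n) ℝ).submatrix id
          (fun j : Fin k => ((J.orderIsoOfFin hJ j : J) : Fin n)) := by
      ext i j
      simp [Matrix.mul_apply, Matrix.one_apply]
    rw [hmul]
    exact Matrix.rank_mul_le_left _ _
  · exact absurd rfl h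

theorem IsPosTropPluecker.sub_sum {n k : ℕ} {P : Finset (Fin n) → ℝ}
    (hP : IsPosTropPluecker n k P) (lam : Fin n → ℝ) :
    IsPosTropPluecker n k fun I => P I - ∑ i ∈ I, lam i := by
  intro S hS a b c d hab hbc hcd ha hb hc hd
  have hsum : ∀ x y, x < y → x ∉ S → y ∉ S →
      ∑ i ∈ insert x (insert y S), lam i = lam x + (lam y + ∑ i ∈ S, lam i) := by
    intro x y hxy hx hy
    rw [Finset.sum_insert (by simp [hx, hxy.ne]), Finset.sum_insert hy]
  simp only [hsum a c (hab.trans hbc) ha hc, hsum b d (hbc.trans hcd) hb hd, hsum a b hab ha hb,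
    hsum c d hcd hc hd, hsum a d (hab.trans (hbc.trans hcd)) ha hd, hsum b c hbc hb hc]
  rcases hP S hS a b c d hab hbc hcd ha hb hc hd with ⟨h1, h2⟩ | ⟨h1, h2⟩
  · left; constructor <;> linarith
  · right; constructor <;> linarith

theorem IsPosTropPluecker.exists_family {n k : ℕ} (hkn : k ≤ n) {P : Finset (Fin n) → ℝ}
    (hP : IsPosTropPluecker n k P) :
    ∃ A : ℕ → Matrix (Fin k) (Fin n) ℝ, ∃ r : ℝ, ∀ J : Finset (Fin n), J.card = k →
      HasExpDecay (fun s => minor k n (A s) J) (P J - r) := by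
  obtain ⟨m, rfl⟩ := Nat.exists_eq_add_of_le hkn
  set Q : Finset ℕ → ℝ := fun J => P (Finset.univ.filter fun i => (i : ℕ) ∈ J) with hQ
  have hQmap : ∀ J, Q (J.map Fin.valEmbedding) = P J := fun J => by
    refine congrArg P ?_
    ext i
    simp [Fin.val_inj]
  have hmap : ∀ S ⊆ Finset.range (k + m), ∃ T : Finset (Fin (k + m)),
      T.map Fin.valEmbedding = S := fun S hS => by
    refine ⟨Finset.univ.filter fun i => (i : ℕ) ∈ S, ?_⟩
    ext x
    simp only [Finset.mem_map, Finset.mem_filter, Finset.mem_univ, true_and,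
      Fin.valEmbedding_apply]
    exact ⟨fun ⟨i, h, hi⟩ => hi ▸ h, fun h => ⟨⟨x, Finset.mem_range.mp (hS h)⟩, h, rfl⟩⟩
  have hQP : IsPosTropPlueckerOn (k + m) k fun J => Q J - Q (Finset.range k) := by
    intro S hS hcard a b c d hab hbc hcd hd haS hbS hcS hdS
    obtain ⟨T, rfl⟩ := hmap S hS
    lift a to Fin (k + m) using by omega
    lift b to Fin (k + m) using by omega
    lift c to Fin (k + m) using by omega
    lift d to Fin (k + m) using hd
    have hins : ∀ x y : Fin (k + m), Q (insert (x : ℕ) (insert (y : ℕ)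
        (T.map Fin.valEmbedding))) = P (insert x (insert y T)) := fun x y => by
      rw [← hQmap, Finset.map_insert, Finset.map_insert]
      rfl
    simp only [hins]
    rw [Finset.card_map] at hcard
    have hnot : ∀ x : Fin (k + m), (x : ℕ) ∉ T.map Fin.valEmbedding → x ∉ T := fun x hx h =>
      hx (Finset.mem_map_of_mem Fin.valEmbedding h)
    rcases hP T hcard a b c d hab hbc hcd (hnot a haS) (hnot b hbS) (hnot c hcS) (hnot d hdS)
      with ⟨h1, h2⟩ | ⟨h1, h2⟩
    · left; constructor <;> linarith
    · right; constructor <;> linarith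
  obtain ⟨A, hA⟩ := hQP.exists_family (sub_self _)
  refine ⟨fun s => Matrix.of fun r j => A s j r, Q (Finset.range k), fun J hJ => ?_⟩
  have := hA (J.map Fin.valEmbedding) (fun x hx => by
    obtain ⟨i, -, rfl⟩ := Finset.mem_map.mp hx
    exact Finset.mem_range.mpr i.2) (by simpa using hJ)
  rw [hQmap] at this
  simp only [← pluecker_map_val] at this
  exact this

open Filter Topology in
/-- The limit of a family of totally positive matrices, normalized at a minimal `k`-subset,
realizes the set of minimizers as a positroid. -/
theorem isPositroid_of_hasExpDecay {n k : ℕ} (hkn : k ≤ n) {R : Finset (Fin n) → ℝ}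
    {A : ℕ → Matrix (Fin k) (Fin n) ℝ}
    (hA : ∀ J : Finset (Fin n), J.card = k → HasExpDecay (fun s => minor k n (A s) J) (R J)) :
    IsPositroid n k {I | I.card = k ∧ ∀ J : Finset (Fin n), J.card = k → R I ≤ R J} := by
  obtain ⟨J₀, hJ₀, hmin⟩ := Finset.exists_min_image
    (Finset.powersetCard k (Finset.univ : Finset (Fin n))) R
    (Finset.powersetCard_nonempty.mpr (by simpa using hkn))
  simp only [Finset.mem_powersetCard, Finset.subset_univ, true_and] at hJ₀ hmin
  set D : ℕ → ℝ := fun s => minor k n (A s) J₀ with hD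
  have hDpos : ∀ s, 0 < D s := (hA J₀ hJ₀).1
  have hratio : ∀ J : Finset (Fin n), J.card = k → ∃ L : ℝ, 0 ≤ L ∧ (L ≠ 0 ↔ R J ≤ R J₀) ∧
      Tendsto (fun s => minor k n (A s) J / D s) atTop (𝓝 L) := by
    intro J hJ
    have hdiv := (hA J hJ).div (hA J₀ hJ₀)
    rcases (hmin J hJ).lt_or_eq with hlt | heq
    · exact ⟨0, le_rfl, by simpa using hlt, by
        simpa using hdiv.tendsto_of_lt (sub_pos.mpr hlt)⟩
    · obtain ⟨-, c, hc, hlim⟩ := hdiv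
      exact ⟨c, hc.le, by simp [hc.ne', heq], by simpa [heq] using hlim⟩
  set M : ℕ → Matrix (Fin k) (Fin k) ℝ := fun s =>
    colMatrix (fun j r => A s r j) (J₀.orderEmbOfFin hJ₀) with hM
  have hMdet : ∀ s, (M s).det = D s := fun s => by
    simp only [hD, hM, minor_eq_pluecker, pluecker, dif_pos hJ₀]
  have hMunit : ∀ s, IsUnit (M s).det := fun s =>
    isUnit_iff_ne_zero.mpr (hMdet s ▸ (hDpos s).ne')
  have hentry : ∀ i j, ∃ L : ℝ, Tendsto (fun s => ((M s)⁻¹ * A s) i j) atTop (𝓝 L) := by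
    intro i j
    set f := Function.update (J₀.orderEmbOfFin hJ₀) i j with hf
    have heq : ∀ s, ((M s)⁻¹ * A s) i j = (colMatrix (fun j r => A s r j) f).det / D s := by
      intro s
      rw [eq_div_iff (hDpos s).ne', mul_comm, ← hMdet, hf, ← colMatrix_updateCol,
        ← Matrix.cramer_apply]
      exact congrFun (Matrix.det_smul_inv_mulVec_eq_cramer (M s) (fun r => A s r j) (hMunit s)) i
    simp only [heq]
    by_cases hinj : Function.Injective f
    · obtain ⟨ε, -, hε⟩ := exists_sign_det_colMatrix hinj
      obtain ⟨L, -, -, hL⟩ := hratio _ (card_image_univ_of_injective hinj)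
      refine ⟨ε * L, (hL.const_mul ε).congr fun s => ?_⟩
      rw [hε, minor_eq_pluecker, mul_div_assoc]
    · exact ⟨0, by simp [det_colMatrix_of_not_injective _ _ hinj]⟩
  choose B hB using hentry
  have hminor : ∀ J : Finset (Fin n), J.card = k →
      Tendsto (fun s => minor k n (A s) J / D s) atTop (𝓝 (minor k n (Matrix.of B) J)) := by
    intro J hJ
    have heq : ∀ s, minor k n (A s) J / D s = minor k n ((M s)⁻¹ * A s) J := by
      intro s
      rw [minor, minor, dif_pos hJ, dif_pos hJ, Matrix.submatrix_mul _ _ id id _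
        Function.bijective_id, Matrix.submatrix_id_id, Matrix.det_mul, Matrix.det_nonsing_inv,
        Ring.inverse_eq_inv', hMdet, div_eq_inv_mul]
    simp only [heq]
    simp only [minor, dif_pos hJ]
    have hdet : Continuous fun N : Matrix (Fin k) (Fin k) ℝ => N.det :=
      Continuous.matrix_det continuous_id
    refine (hdet.tendsto _).comp ?_
    exact tendsto_pi_nhds.mpr fun r => tendsto_pi_nhds.mpr fun j => hB r _
  have hspec : ∀ J : Finset (Fin n), J.card = k → 0 ≤ minor k n (Matrix.of B) J ∧
      (minor k n (Matrix.of B) J ≠ 0 ↔ R J ≤ R J₀) := by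
    intro J hJ
    obtain ⟨L, hL0, hL, hlim⟩ := hratio J hJ
    rw [tendsto_nhds_unique (hminor J hJ) hlim]
    exact ⟨hL0, hL⟩
  refine ⟨Matrix.of B, rank_eq_of_minor_ne_zero ((hspec J₀ hJ₀).2.mpr le_rfl), fun I => ?_,
    fun I hI => ?_⟩
  · by_cases hI : I.card = k
    · exact (hspec I hI).1
    · rw [minor, dif_neg hI]
  · rw [(hspec I hI).2]
    exact ⟨fun h => h.2 J₀ hJ₀, fun h => ⟨hI, fun J hJ => h.trans (hmin J hJ)⟩⟩

theorem IsPosTropPluecker.isPositroid_faceBases {n k : ℕ} (hkn : k ≤ n)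
    {P : Finset (Fin n) → ℝ} (hP : IsPosTropPluecker n k P) (lam : Fin n → ℝ) :
    IsPositroid n k (faceBases n k P lam) := by
  obtain ⟨A, r, hA⟩ := (hP.sub_sum lam).exists_family hkn
  convert isPositroid_of_hasExpDecay hkn hA using 1
  ext I
  refine and_congr_right fun _ => forall₂_congr fun J _ => ?_
  constructor <;> intro h <;> linarith

/-- A face of the subdivision can be confined to the `k`-subsets between `S` and `S ∪ T`. -/
theorem exists_faceBases_between {n k : ℕ} (P : Finset (Fin n) → ℝ) (μ : Fin n → ℝ)
    (S T : Finset (Fin n)) :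
    ∃ lam : Fin n → ℝ, ∀ I : Finset (Fin n), I.card = k → S ⊆ I → I ⊆ S ∪ T →
      (I ∈ faceBases n k P lam ↔ ∀ J : Finset (Fin n), J.card = k → S ⊆ J → J ⊆ S ∪ T →
        P I - ∑ i ∈ I, μ i ≤ P J - ∑ i ∈ J, μ i) := by
  obtain ⟨M, hM⟩ := (Set.finite_range fun p : Finset (Fin n) × Finset (Fin n) =>
    (P p.1 - ∑ i ∈ p.1, μ i) - (P p.2 - ∑ i ∈ p.2, μ i)).bddAbove
  replace hM : ∀ I J : Finset (Fin n),
      (P I - ∑ i ∈ I, μ i) - (P J - ∑ i ∈ J, μ i) ≤ M := fun I J => hM ⟨(I, J), rfl⟩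
  have hM0 : 0 ≤ M := by simpa using hM ∅ ∅
  set ε : Fin n → ℝ := fun x => (if x ∈ S then 1 else 0) - (if x ∉ S ∪ T then 1 else 0) with hε
  have hsum : ∀ J : Finset (Fin n),
      ∑ i ∈ J, ε i = ((J ∩ S).card : ℝ) - (J \ (S ∪ T)).card := by
    intro J
    rw [hε, Finset.sum_sub_distrib, Finset.sum_boole, Finset.sum_boole,
      Finset.filter_mem_eq_inter, ← Finset.sdiff_eq_filter]
  have hgood : ∀ J : Finset (Fin n), S ⊆ J → J ⊆ S ∪ T → ∑ i ∈ J, ε i = S.card := by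
    intro J h1 h2
    rw [hsum, Finset.inter_eq_right.mpr h1, Finset.sdiff_eq_empty_iff_subset.mpr h2]
    simp
  have hbad : ∀ J : Finset (Fin n), ¬(S ⊆ J ∧ J ⊆ S ∪ T) → ∑ i ∈ J, ε i ≤ S.card - 1 := by
    intro J h
    rw [hsum]
    have h1 : (J ∩ S).card ≤ S.card := Finset.card_le_card Finset.inter_subset_right
    have h2 : (J ∩ S).card + 1 ≤ S.card + (J \ (S ∪ T)).card := by
      by_cases hS : S ⊆ J
      · have : (J \ (S ∪ T)).Nonempty := Finset.sdiff_nonempty.mpr fun hT => h ⟨hS, hT⟩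
        have := this.card_pos
        omega
      · have : (J ∩ S).card < S.card := Finset.card_lt_card
          ⟨Finset.inter_subset_right, fun hle => hS fun x hx => (Finset.mem_inter.mp (hle hx)).1⟩
        omega
    have h3 : ((J ∩ S).card : ℝ) + 1 ≤ S.card + (J \ (S ∪ T)).card := by exact_mod_cast h2
    linarith
  have hlam : ∀ J : Finset (Fin n), ∑ i ∈ J, (M * ε i + μ i) = M * ∑ i ∈ J, ε i + ∑ i ∈ J, μ i :=
    fun J => by rw [Finset.sum_add_distrib, Finset.mul_sum]
  refine ⟨fun x => M * ε x + μ x, fun I hI hSI hIT => ?_⟩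
  simp only [faceBases, Set.mem_ofPred_eq, hI, true_and, hlam, hgood I hSI hIT]
  refine forall₂_congr fun J _ => ?_
  by_cases hJ : S ⊆ J ∧ J ⊆ S ∪ T
  · rw [hgood J hJ.1 hJ.2]
    exact ⟨fun h _ _ => by linarith, fun h => by linarith [h hJ.1 hJ.2]⟩
  · refine ⟨fun _ h1 h2 => absurd ⟨h1, h2⟩ hJ, fun _ => ?_⟩
    have := mul_le_mul_of_nonneg_left (hbad J hJ) hM0
    linarith [hM I J]

theorem eq_insert_insert_of_subset_union_four {α : Type*} [DecidableEq α] {S J : Finset α}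
    {a b c d : α} (hcard : J.card = S.card + 2) (hSJ : S ⊆ J) (hJ : J ⊆ S ∪ {a, b, c, d}) :
    J = insert a (insert b S) ∨ J = insert c (insert d S) ∨ J = insert a (insert c S) ∨
      J = insert b (insert d S) ∨ J = insert a (insert d S) ∨ J = insert b (insert c S) := by
  obtain ⟨x, y, hxy, h⟩ : ∃ x y, x ≠ y ∧ J \ S = {x, y} := Finset.card_eq_two.mp (by
    rw [Finset.card_sdiff_of_subset hSJ]; omega)
  have hJS : J = insert x (insert y S) := by
    rw [← Finset.sdiff_union_of_subset hSJ, h]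
    ext z
    simp
  have hmem : ∀ z ∈ J \ S, z = a ∨ z = b ∨ z = c ∨ z = d := fun z hz => by
    obtain ⟨h1, h2⟩ := Finset.mem_sdiff.mp hz
    simpa [h2] using hJ h1
  have hx := hmem x (by simp [h])
  have hy := hmem y (by simp [h])
  subst hJS
  rcases hx with rfl | rfl | rfl | rfl <;> rcases hy with rfl | rfl | rfl | rfl <;>
    first
    | exact absurd rfl hxy
    | simp only [true_or, or_true]
    | (rw [Finset.insert_comm]; simp only [true_or, or_true])

/-- The combinatorial content of a three-term relation among nonnegative minors supported on
minimal pairs. -/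
theorem min_attained_of_three_term {α β γ x y z w z' w' : ℝ}
    (hx : 0 ≤ x) (hy : 0 ≤ y) (hz : 0 ≤ z) (hw : 0 ≤ w) (hz' : 0 ≤ z') (hw' : 0 ≤ w')
    (hrel : x * y = z * w + z' * w')
    (hx0 : x ≠ 0 ↔ β ≤ α ∧ β ≤ γ) (hy0 : y ≠ 0 ↔ β ≤ α ∧ β ≤ γ)
    (hz0 : z ≠ 0 ↔ α ≤ β ∧ α ≤ γ) (hw0 : w ≠ 0 ↔ α ≤ β ∧ α ≤ γ)
    (hz0' : z' ≠ 0 ↔ γ ≤ α ∧ γ ≤ β) (hw0' : w' ≠ 0 ↔ γ ≤ α ∧ γ ≤ β) :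
    (β = α ∧ α ≤ γ) ∨ (β = γ ∧ γ ≤ α) := by
  have hzw := mul_nonneg hz hw
  have hzw' := mul_nonneg hz' hw'
  by_cases hβ : β ≤ α ∧ β ≤ γ
  · have hpos : 0 < x * y := (mul_nonneg hx hy).lt_of_ne
      (mul_ne_zero (hx0.mpr hβ) (hy0.mpr hβ)).symm
    by_cases h : z = 0
    · have hz'0 : z' ≠ 0 := by
        rintro rfl
        simp [h] at hrel
        rcases hrel with h' | h' <;> simp [h'] at hpos
      exact Or.inr ⟨le_antisymm hβ.2 (hz0'.mp hz'0).2, (hz0'.mp hz'0).1⟩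
    · exact Or.inl ⟨le_antisymm hβ.1 (hz0.mp h).1, (hz0.mp h).2⟩
  · have hx1 : x = 0 := by_contra fun h => hβ (hx0.mp h)
    rw [hx1, zero_mul] at hrel
    have h1 : z * w = 0 := by linarith
    have h2 : z' * w' = 0 := by linarith
    have hα : ¬(α ≤ β ∧ α ≤ γ) := fun h => mul_ne_zero (hz0.mpr h) (hw0.mpr h) h1
    have hγ : ¬(γ ≤ α ∧ γ ≤ β) := fun h => mul_ne_zero (hz0'.mpr h) (hw0'.mpr h) h2
    grind

theorem isPosTropPluecker_of_isPositroid_faceBases {n k : ℕ} {P : Finset (Fin n) → ℝ}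
    (h : ∀ lam : Fin n → ℝ, IsPositroid n k (faceBases n k P lam)) :
    IsPosTropPluecker n k P := by
  intro S hS a b c d hab hbc hcd ha hb hc hd
  subst hS
  have hac := hab.trans hbc
  have hbd := hbc.trans hcd
  have had := hac.trans hcd
  set B := (P (insert a (insert b S)) - P (insert c (insert d S))) / 2 with hB
  set C := (P (insert a (insert c S)) - P (insert b (insert d S))) / 2 with hC
  set D := (P (insert a (insert d S)) - P (insert b (insert c S))) / 2 with hD
  set μ : Fin n → ℝ := fun x => if x = a then (B + C + D) / 2 else if x = b then (B - C - D) / 2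
    else if x = c then (C - B - D) / 2 else if x = d then (D - B - C) / 2 else 0 with hμ
  have hμa : μ a = (B + C + D) / 2 := by simp [hμ]
  have hμb : μ b = (B - C - D) / 2 := by simp [hμ, hab.ne']
  have hμc : μ c = (C - B - D) / 2 := by simp [hμ, hac.ne', hbc.ne']
  have hμd : μ d = (D - B - C) / 2 := by simp [hμ, had.ne', hbd.ne', hcd.ne']
  set α := P (insert a (insert b S)) + P (insert c (insert d S)) with hα
  set β := P (insert a (insert c S)) + P (insert b (insert d S)) with hβ
  set γ := P (insert a (insert d S)) + P (insert b (insert c S)) with hγ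
  obtain ⟨lam, hlam⟩ := exists_faceBases_between (k := S.card + 2) P μ S {a, b, c, d}
  obtain ⟨A, -, hA0, hA⟩ := h lam
  have hsum : ∀ x y, x < y → x ∉ S → y ∉ S →
      ∑ i ∈ insert x (insert y S), μ i = μ x + μ y + ∑ i ∈ S, μ i := by
    intro x y hxy hx hy
    rw [Finset.sum_insert (by simp [hx, hxy.ne]), Finset.sum_insert hy, add_assoc]
  have hcard : ∀ x y, x < y → x ∉ S → y ∉ S → (insert x (insert y S)).card = S.card + 2 := by
    intro x y hxy hx hy
    rw [Finset.card_insert_of_notMem (by simp [hx, hxy.ne]), Finset.card_insert_of_notMem hy]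
  have hsub : ∀ x y, S ⊆ insert x (insert y S) := fun x y =>
    (Finset.subset_insert y S).trans (Finset.subset_insert x _)
  have hface : ∀ x y v, x < y → x ∉ S → y ∉ S → x ∈ ({a, b, c, d} : Finset (Fin n)) →
      y ∈ ({a, b, c, d} : Finset (Fin n)) →
      P (insert x (insert y S)) - (μ x + μ y) = v / 2 →
      (minor (S.card + 2) n A (insert x (insert y S)) ≠ 0 ↔ v ≤ α ∧ v ≤ β ∧ v ≤ γ) := by
    intro x y v hxy hx hy hx4 hy4 hv
    rw [← hA _ (hcard x y hxy hx hy), hlam _ (hcard x y hxy hx hy) (hsub x y)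
      (by
        intro z hz
        rw [Finset.mem_union]
        rcases Finset.mem_insert.mp hz with rfl | hz
        · exact Or.inr hx4
        · rcases Finset.mem_insert.mp hz with rfl | hz
          · exact Or.inr hy4
          · exact Or.inl hz), hsum x y hxy hx hy]
    constructor
    · intro hmin
      have h1 := hmin _ (hcard a b hab ha hb) (hsub a b) (by grind)
      have h2 := hmin _ (hcard a c hac ha hc) (hsub a c) (by grind)
      have h3 := hmin _ (hcard a d had ha hd) (hsub a d) (by grind)
      rw [hsum a b hab ha hb] at h1
      rw [hsum a c hac ha hc] at h2
      rw [hsum a d had ha hd] at h3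
      refine ⟨?_, ?_, ?_⟩ <;> linarith
    · rintro ⟨h1, h2, h3⟩ J hJ hSJ hJT
      rcases eq_insert_insert_of_subset_union_four hJ hSJ hJT with
        rfl | rfl | rfl | rfl | rfl | rfl
      · rw [hsum a b hab ha hb]; linarith
      · rw [hsum c d hcd hc hd]; linarith
      · rw [hsum a c hac ha hc]; linarith
      · rw [hsum b d hbd hb hd]; linarith
      · rw [hsum a d had ha hd]; linarith
      · rw [hsum b c hbc hb hc]; linarith
  refine min_attained_of_three_term (hA0 _) (hA0 _) (hA0 _) (hA0 _) (hA0 _) (hA0 _)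
    (pluecker_three_term (e := fun x : Fin n => ((x : ℕ) : ℝ))
      (Nat.strictMono_cast.comp Fin.val_strictMono) (fun j r => A r j) rfl hab hbc hcd ha hb hc hd)
    ?_ ?_ ?_ ?_ ?_ ?_
  · refine (hface a c β hac ha hc (by simp) (by simp) (by linarith)).trans (by simp)
  · refine (hface b d β hbd hb hd (by simp) (by simp) (by linarith)).trans (by simp)
  · refine (hface a b α hab ha hb (by simp) (by simp) (by linarith)).trans (by simp)
  · refine (hface c d α hcd hc hd (by simp) (by simp) (by linarith)).trans (by simp)
  · refine (hface a d γ had ha hd (by simp) (by simp) (by linarith)).trans (by simp)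
  · refine (hface b c γ hbc hb hc (by simp) (by simp) (by linarith)).trans (by simp)

/-- **Positive tropical Plücker vectors ↔ positroidal subdivisions.** A height
function `P` on the vertices of `Δ_{k,n}` is a positive tropical Plücker vector
if and only if every face of the induced regular subdivision `D_P` is
positroidal. -/
theorem posTropPluecker_iff_positroidal_subdivision (n k : ℕ) (hkn : k ≤ n)
    (P : Finset (Fin n) → ℝ) :
    IsPosTropPluecker n k P ↔
      ∀ lam : Fin n → ℝ, IsPositroid n k (faceBases n k P lam) :=
  ⟨fun hP => hP.isPositroid_faceBases hkn, isPosTropPluecker_of_isPositroid_faceBases⟩
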